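/- The plain switch distribution is weakly universal: for every stationary probability measure Q on Ω = {1,...,D}^ℤ, lim_{n→∞} (1/n)·E_Q[−log P(X_1^n)] = h_Q. -/

import Mathlib

open Filter MeasureTheory
open scoped Topology

/-- Number of occurrences `c(w|z)` of `w` as a substring of `z`. -/
def cnt {D : ℕ} (w z : List (Fin D)) : ℕ :=
  ((List.range (z.length - w.length + 1)).filter
    (fun i => (z.drop i).take w.length = w)).length

/-- Count `c(w | z_1^{m-1})` of `w` in the string `z` with its last symbol removed,
with the convention that counting in a block of length `-1` (i.e. when `z` itself is
empty) gives `0`. -/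
def cntPred {D : ℕ} (w z : List (Fin D)) : ℕ :=
  if z = [] then 0 else cnt w z.dropLast

/-- The prefix `x_1^n` of the one-sided sequence `x` (0-indexed: `x i = x_{i+1}`). -/
def pref {D : ℕ} (x : ℕ → Fin D) (n : ℕ) : List (Fin D) :=
  (List.range n).map x

/-- Adaptive Markov predictor: the natural-number index corresponds to the Markov
order shifted by one, so `Bpred D xs a (k+1) = B(a | xs, k)` and
`Bpred D xs a 0 = B(a | xs, -1) = 1/D`, where
`B(x_{n+1}|x_1^n, k) = (c(x_{n+1-k}^{n+1}|x_1^n) + B(x_{n+1}|x_1^n, k-1)) /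
(c(x_{n+1-k}^{n}|x_1^{n-1}) + 1)`.  Counts of substrings whose indices fall outside
the string are taken to be zero. -/
noncomputable def Bpred (D : ℕ) (xs : List (Fin D)) (a : Fin D) : ℕ → ℝ
  | 0 => 1 / D
  | k + 1 =>
    if k ≤ xs.length then
      ((cnt (xs.drop (xs.length - k) ++ [a]) xs : ℝ) + Bpred D xs a k) /
      ((cntPred (xs.drop (xs.length - k)) xs : ℝ) + 1)
    else Bpred D xs a k

/-- Partial switch distribution `P(x_1^n, k)` with Markov order `k : ℤ`:
`P(x_1,-1) = p_0 B(x_1|-1)`, `P(x_1,0) = (1-p_0) B(x_1|0)`, `P(x_1^n,k) = 0`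
for `k < -1` or `k ≥ n`, and
`P(x_1^{n+1},k) = [p_n P(x_1^n,k) + (1-p_n) P(x_1^n,k-1)] B(x_{n+1}|x_1^n,k)`. -/
noncomputable def Ppart (D : ℕ) (p : ℕ → ℝ) (x : ℕ → Fin D) : ℕ → ℤ → ℝ
  | 0, _ => 0
  | 1, k =>
    if k = -1 then p 0 * Bpred D [] (x 0) 0
    else if k = 0 then (1 - p 0) * Bpred D [] (x 0) 1
    else 0
  | n + 2, k =>
    if -1 ≤ k ∧ k ≤ (n : ℤ) + 1 then
      (p (n + 1) * Ppart D p x (n + 1) k +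
        (1 - p (n + 1)) * Ppart D p x (n + 1) (k - 1)) *
        Bpred D (pref x (n + 1)) (x (n + 1)) (k + 1).toNat
    else 0

/-- The plain switch distribution `P(x_1^n) = Σ_{k=-1}^{n-1} P(x_1^n, k)`. -/
noncomputable def swP (D : ℕ) (p : ℕ → ℝ) (x : ℕ → Fin D) (n : ℕ) : ℝ :=
  ∑ kk ∈ Finset.range (n + 1), Ppart D p x n ((kk : ℤ) - 1)

/-- The two-sided sequence space `Ω = {1,...,D}^ℤ` with the product σ-algebra. -/
abbrev Omega (D : ℕ) := ℤ → Fin D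

/-- The shift `T : Ω → Ω`. -/
def shiftT (D : ℕ) : Omega D → Omega D := fun ω i => ω (i + 1)

/-- The cylinder set `{X_1 = x 0, ..., X_n = x (n-1)}`. -/
def cylSet (D : ℕ) (x : ℕ → Fin D) (n : ℕ) : Set (Omega D) :=
  {ω | ∀ i < n, ω ((i : ℤ) + 1) = x i}

/-- The one-sided sample path `X_1, X_2, ...` of `ω` (0-indexed). -/
def path (D : ℕ) (ω : Omega D) : ℕ → Fin D := fun i => ω ((i : ℤ) + 1)

/-- The cylinder probability `Q(x_1^n)`. -/
noncomputable def Qstr (D : ℕ) (Q : Measure (Omega D)) (x : ℕ → Fin D) (n : ℕ) : ℝ :=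
  (Q (cylSet D x n)).toReal

/-!
Fix an order `k`. The switch distribution may reach order `k` after `k + 1` symbols and stay there
ever after; since `∏ p_n > 0`, this costs only a constant factor, so `P` dominates a constant times
the product of the adaptive predictors of order `k`. Replacing the lower-order predictor in their
numerators by a polynomially small `δ`, their product is compared with the Laplace estimator: the
latter beats every `k`-th order Markov source, because a multinomial probability is at most one,
and the numerators `c + δ` in place of `c + 1` cost only a factor polynomial in `n`.

Applied to the `k`-th order Markov approximation of `Q`, this bounds the rate of `-log P` by
`H(k + 1) - H(k)`, where `H(n)` is the entropy of `X_1^n`. As `H(n) / n` tends to `h_Q`, these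
increments come below every `r > h_Q`. Conversely, `P` is a probability distribution on blocks of
each length, so the rate is at least `h_Q` by Gibbs' inequality.
-/

section Counting

open Finset

variable {S W A M : Type*}

theorem prod_pow_le_prod_factorial_div_factorial_sum [Fintype A] {θ : A → ℝ}
    (hθ : ∀ a, 0 ≤ θ a) (hsum : ∑ a, θ a ≤ 1) (N : A → ℕ) :
    ∏ a, θ a ^ N a ≤ (∏ a, ((N a).factorial : ℝ)) / (∑ a, N a).factorial := by
  classical
  have prod_pow_nonneg (N : A → ℕ) : 0 ≤ ∏ a, θ a ^ N a :=
    prod_nonneg fun a _ => pow_nonneg (hθ a) _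
  have multinomial_mul_le_one : (Nat.multinomial univ N : ℝ) * ∏ a, θ a ^ N a ≤ 1 :=
    calc (Nat.multinomial univ N : ℝ) * ∏ a, θ a ^ N a
      _ ≤ ∑ N' ∈ piAntidiag univ (∑ a, N a), (Nat.multinomial univ N' : ℝ) * ∏ a, θ a ^ N' a :=
        single_le_sum (f := fun N' => (Nat.multinomial univ N' : ℝ) * ∏ a, θ a ^ N' a)
          (fun N' _ => mul_nonneg (Nat.cast_nonneg _) (prod_pow_nonneg N')) (by simp)
      _ = (∑ a, θ a) ^ ∑ a, N a := (sum_pow_eq_sum_piAntidiag univ θ _).symm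
      _ ≤ 1 := pow_le_one₀ (sum_nonneg fun a _ => hθ a) hsum
  rw [le_div_iff₀ (by positivity), ← Nat.multinomial_spec]
  push_cast
  calc (∏ a, θ a ^ N a) * ((∏ a, ((N a).factorial : ℝ)) * Nat.multinomial univ N)
    _ = (∏ a, ((N a).factorial : ℝ)) * (Nat.multinomial univ N * ∏ a, θ a ^ N a) := by ring
    _ ≤ ∏ a, ((N a).factorial : ℝ) := mul_le_of_le_one_right (by positivity) multinomial_mul_le_one

theorem div_le_prod_range_add_div_add_one {δ : ℝ} (hδ₀ : 0 ≤ δ) (hδ₁ : δ ≤ 1) {N n : ℕ}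
    (hN : N ≤ n) : δ / n ≤ ∏ j ∈ range N, ((j : ℝ) + δ) / (j + 1) := by
  have div_succ_le (N : ℕ) : δ / (N + 1) ≤ ∏ j ∈ range (N + 1), ((j : ℝ) + δ) / (j + 1) := by
    induction N with
    | zero => simp
    | succ N ih =>
      rw [prod_range_succ]
      calc δ / ((N + 1 : ℕ) + 1)
        _ = δ / (N + 1) * ((N + 1 : ℕ) / ((N + 1 : ℕ) + 1)) := by push_cast; field_simp
        _ ≤ δ / (N + 1) * (((N + 1 : ℕ) + δ) / ((N + 1 : ℕ) + 1)) := by gcongr; linarith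
        _ ≤ _ := by gcongr
  obtain _ | N := N
  · obtain rfl | hn := n.eq_zero_or_pos
    · simp
    · exact (div_le_self hδ₀ (mod_cast hn)).trans (by simpa using hδ₁)
  · refine le_trans ?_ (div_succ_le N)
    have : (N : ℝ) + 1 ≤ n := mod_cast hN
    gcongr

variable [DecidableEq S] [DecidableEq W] [DecidableEq A]

theorem prod_range_apply_count [Fintype S] [CommMonoid M] (s : ℕ → S) (g : S → ℕ → M) (n : ℕ) :
    ∏ i ∈ range n, g (s i) (Nat.count (s · = s i) i) =
      ∏ v, ∏ j ∈ range (Nat.count (s · = v) n), g v j := by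
  induction n with
  | zero => simp
  | succ n ih =>
    have fiber_succ (v : S) : ∏ j ∈ range (Nat.count (s · = v) (n + 1)), g v j =
        (∏ j ∈ range (Nat.count (s · = v) n), g v j) *
          if s n = v then g v (Nat.count (s · = v) n) else 1 := by
      rw [Nat.count_succ]
      split_ifs <;> simp [prod_range_succ]
    simp_rw [fiber_succ, prod_mul_distrib, prod_ite_eq, mem_univ, if_true, prod_range_succ, ih]

theorem sum_count_prodMk [Fintype A] (u : ℕ → W) (a : ℕ → A) (w : W) (n : ℕ) :
    ∑ b, Nat.count (fun j => (u j, a j) = (w, b)) n = Nat.count (u · = w) n := by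
  simp_rw [Nat.count_eq_card_filter_range]
  rw [card_eq_sum_card_fiberwise (f := a) (t := univ) (by simp)]
  simp_rw [filter_filter, Prod.mk.injEq]

theorem div_pow_card_le_prod_count_add_div [Fintype S] {δ : ℝ} (hδ₀ : 0 ≤ δ) (hδ₁ : δ ≤ 1)
    (s : ℕ → S) (n : ℕ) :
    (δ / n) ^ Fintype.card S ≤ ∏ i ∈ range n,
      ((Nat.count (s · = s i) i : ℝ) + δ) / ((Nat.count (s · = s i) i : ℝ) + 1) := by
  rw [prod_range_apply_count s fun _ j => ((j : ℝ) + δ) / (j + 1), ← card_univ, ← prod_const]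
  exact prod_le_prod (fun _ _ => by positivity) fun v _ =>
    div_le_prod_range_add_div_add_one hδ₀ hδ₁ (Nat.count_le _)

variable [Fintype A] {θ : W → A → ℝ}

theorem prod_le_prod_count_add_one_div [Finite W] (hθ : ∀ w a, 0 ≤ θ w a)
    (hsum : ∀ w, ∑ a, θ w a ≤ 1) (u : ℕ → W) (a : ℕ → A) (n : ℕ) :
    ∏ i ∈ range n, θ (u i) (a i) ≤ ∏ i ∈ range n,
      ((Nat.count (fun j => (u j, a j) = (u i, a i)) i : ℝ) + 1) /
        ((Nat.count (u · = u i) i : ℝ) + 1) := by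
  have := Fintype.ofFinite W
  have prod_add_one (N : ℕ) : ∏ j ∈ range N, ((j : ℝ) + 1) = N.factorial := by
    rw [← prod_range_add_one_eq_factorial]
    push_cast
    rfl
  have prod_param := prod_range_apply_count (fun i => (u i, a i)) (fun s _ => θ s.1 s.2) n
  have prod_pairs := prod_range_apply_count (fun i => (u i, a i)) (fun _ j => (j : ℝ) + 1) n
  have prod_contexts := prod_range_apply_count u (fun _ j => (j : ℝ) + 1) n
  simp only [prod_add_one, prod_const, card_range, Fintype.prod_prod_type] at *
  rw [prod_div_distrib, prod_param, prod_pairs, prod_contexts, ← prod_div_distrib]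
  refine prod_le_prod (fun w _ => prod_nonneg fun b _ => pow_nonneg (hθ w b) _) fun w _ => ?_
  rw [← sum_count_prodMk u a w n]
  exact prod_pow_le_prod_factorial_div_factorial_sum (hθ w) (hsum w) _

theorem div_pow_card_mul_prod_le_prod_count_add_div [Fintype W] (hθ : ∀ w a, 0 ≤ θ w a)
    (hsum : ∀ w, ∑ a, θ w a ≤ 1) {δ : ℝ} (hδ₀ : 0 ≤ δ) (hδ₁ : δ ≤ 1)
    (u : ℕ → W) (a : ℕ → A) (n : ℕ) :
    (δ / n) ^ Fintype.card (W × A) * ∏ i ∈ range n, θ (u i) (a i) ≤ ∏ i ∈ range n,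
      ((Nat.count (fun j => (u j, a j) = (u i, a i)) i : ℝ) + δ) /
        ((Nat.count (u · = u i) i : ℝ) + 1) := by
  calc (δ / n) ^ Fintype.card (W × A) * ∏ i ∈ range n, θ (u i) (a i)
    _ ≤ _ := mul_le_mul (div_pow_card_le_prod_count_add_div hδ₀ hδ₁ (fun i => (u i, a i)) n)
        (prod_le_prod_count_add_one_div hθ hsum u a n) (prod_nonneg fun _ _ => hθ _ _)
        (prod_nonneg fun _ _ => by positivity)
    _ = _ := by
      rw [← prod_mul_distrib]
      exact prod_congr rfl fun i _ => div_mul_div_cancel₀ (by positivity)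

end Counting

section Blocks

variable {A R : Type*} {n : ℕ}

/-- The initial block `x_1^n` of a sequence, as a tuple. The block of length `k` starting after
position `i` is `block k (x ∘ (i + ·))`. -/
def block (n : ℕ) (x : ℕ → A) : Fin n → A := fun t => x t

theorem block_succ_eq_block_succ_iff {x y : ℕ → A} {k : ℕ} :
    block (k + 1) x = block (k + 1) y ↔ (block k x, x k) = (block k y, y k) := by
  simp [block, funext_iff, Fin.forall_fin_succ']

theorem block_update (x : ℕ → A) (k : ℕ) (a : A) :
    block k (Function.update x k a) = block k x :=
  funext fun i => Function.update_of_ne i.2.ne _ _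

/-- Continuation of a finite block by zeros, a section of `block n`. -/
noncomputable def extendZero [Zero A] (v : Fin n → A) : ℕ → A := Function.extend Fin.val v 0

theorem extendZero_val [Zero A] (v : Fin n → A) (i : Fin n) : extendZero v i = v i :=
  Fin.val_injective.extend_apply v 0 i

theorem extendZero_of_le [Zero A] (v : Fin n → A) {i : ℕ} (hi : n ≤ i) : extendZero v i = 0 :=
  Function.extend_apply' v _ i (by rintro ⟨j, rfl⟩; exact hi.not_gt j.2)

theorem extendZero_block_apply [Zero A] (x : ℕ → A) {i : ℕ} (hi : i < n) :
    extendZero (block n x) i = x i :=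
  extendZero_val (block n x) ⟨i, hi⟩

theorem block_extendZero [Zero A] (v : Fin n → A) : block n (extendZero v) = v :=
  funext (extendZero_val v)

theorem extendZero_snoc [Zero A] (v : Fin n → A) (a : A) :
    extendZero (Fin.snoc v a : Fin (n + 1) → A) = Function.update (extendZero v) n a := by
  funext i
  obtain hlt | rfl | hgt := lt_trichotomy i n
  · rw [Function.update_of_ne hlt.ne, extendZero_val v ⟨i, hlt⟩]
    exact (extendZero_val _ (Fin.castSucc ⟨i, hlt⟩)).trans (Fin.snoc_castSucc _ _ _)
  · rw [Function.update_self]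
    exact (extendZero_val _ (Fin.last i)).trans (Fin.snoc_last _ _)
  · rw [Function.update_of_ne hgt.ne', extendZero_of_le _ hgt, extendZero_of_le _ hgt.le]

theorem apply_extendZero_block [Zero A] {f : (ℕ → A) → R} (hf : DependsOn f (Set.Iio n))
    (x : ℕ → A) : f (extendZero (block n x)) = f x :=
  hf fun _ hi => extendZero_block_apply x hi

theorem exists_forall_le_of_dependsOn_Iio [Zero A] [Finite A] [LinearOrder R]
    {f : (ℕ → A) → R} (hf : DependsOn f (Set.Iio n)) : ∃ y, ∀ x, f y ≤ f x := by
  obtain ⟨v, hv⟩ := Finite.exists_min fun v : Fin n → A => f (extendZero v)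
  exact ⟨extendZero v, fun x => (hv (block n x)).trans_eq (apply_extendZero_block hf x)⟩

theorem sum_eq_sum_sum_snoc [Fintype A] [AddCommMonoid R] (f : (Fin (n + 1) → A) → R) :
    ∑ v, f v = ∑ v : Fin n → A, ∑ a, f (Fin.snoc v a) := by
  rw [← (Fin.snocEquiv fun _ : Fin (n + 1) => A).sum_comp, Fintype.sum_prod_type_right]
  rfl

theorem dependsOn_neg_log {f : (ℕ → A) → ℝ} {s : Set ℕ} (hf : DependsOn f s) :
    DependsOn (fun x => -Real.log (f x)) s :=
  fun _ _ h => congrArg (-Real.log ·) (hf h)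

end Blocks

section Prefixes

variable {D : ℕ} {x : ℕ → Fin D}

theorem length_pref (x : ℕ → Fin D) (n : ℕ) : (pref x n).length = n := by
  simp [pref]

theorem pref_eq_pref_iff {y : ℕ → Fin D} {n : ℕ} : pref x n = pref y n ↔ block n x = block n y := by
  simp [pref, block, funext_iff, Fin.forall_iff]

theorem dependsOn_pref (n : ℕ) : DependsOn (fun x : ℕ → Fin D => pref x n) (Set.Iio n) :=
  fun _ _ h => pref_eq_pref_iff.2 (funext fun i => h i i.2)

theorem exists_pref_eq [NeZero D] (xs : List (Fin D)) : ∃ x, pref x xs.length = xs :=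
  ⟨fun i => xs.getD i 0, List.ext_getElem (by simp [pref]) (by simp +contextual [pref])⟩

theorem take_drop_pref (x : ℕ → Fin D) {n i k : ℕ} (h : i + k ≤ n) :
    ((pref x n).drop i).take k = pref (x ∘ (i + ·)) k :=
  List.ext_getElem (by simp [pref]; omega) (by simp [pref])

theorem drop_pref_add (x : ℕ → Fin D) (i k : ℕ) :
    (pref x (i + k)).drop i = pref (x ∘ (i + ·)) k := by
  rw [← take_drop_pref x le_rfl, List.take_of_length_le (by simp [length_pref])]

theorem dropLast_pref_succ (x : ℕ → Fin D) (n : ℕ) : (pref x (n + 1)).dropLast = pref x n := by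
  simp [pref, List.range_succ]

theorem pref_append_singleton (y : ℕ → Fin D) (k : ℕ) (a : Fin D) :
    pref y k ++ [a] = pref (Function.update y k a) (k + 1) := by
  have pref_update : pref (Function.update y k a) k = pref y k :=
    dependsOn_pref k fun i hi => Function.update_of_ne (Set.mem_Iio.1 hi).ne _ _
  rw [← pref_update]
  simp [pref, List.range_succ]

theorem cnt_eq_count (w z : List (Fin D)) :
    cnt w z = Nat.count (fun j => (z.drop j).take w.length = w) (z.length - w.length + 1) :=
  List.countP_eq_length_filter.symm

theorem cnt_eq_zero_of_length_lt {w z : List (Fin D)} (h : z.length < w.length) : cnt w z = 0 := by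
  rw [cnt_eq_count, Nat.sub_eq_zero_of_le h.le, zero_add, Nat.count_one, List.drop_zero,
    List.take_of_length_le h.le, if_neg (by rintro rfl; exact h.false)]

theorem cnt_pref_pref (x y : ℕ → Fin D) (m n : ℕ) :
    cnt (pref y m) (pref x n) =
      Nat.count (fun j => block m (x ∘ (j + ·)) = block m y) (n + 1 - m) := by
  obtain hmn | hnm := le_or_gt m n
  · rw [cnt_eq_count, length_pref, length_pref, ← Nat.sub_add_comm hmn,
      Nat.count_eq_card_filter_range, Nat.count_eq_card_filter_range]
    congr 1
    refine Finset.filter_congr fun j hj => ?_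
    rw [take_drop_pref x (by grind), pref_eq_pref_iff]
  · rw [cnt_eq_zero_of_length_lt (by simpa [length_pref]), Nat.sub_eq_zero_of_le hnm,
      Nat.count_zero]

theorem cnt_pref_append_singleton_pref (x y : ℕ → Fin D) (a : Fin D) (k i : ℕ) :
    cnt (pref y k ++ [a]) (pref x (i + k)) =
      Nat.count (fun j => (block k (x ∘ (j + ·)), x (j + k)) = (block k y, a)) i := by
  rw [pref_append_singleton, cnt_pref_pref, show i + k + 1 - (k + 1) = i by omega]
  simp only [block_succ_eq_block_succ_iff, block_update, Function.update_self, Function.comp_apply]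

theorem cntPred_pref_pref (x y : ℕ → Fin D) (k i : ℕ) :
    cntPred (pref y k) (pref x (i + k)) =
      Nat.count (fun j => block k (x ∘ (j + ·)) = block k y) i := by
  rw [cntPred]
  split_ifs with hnil
  · have : i + k = 0 := by simpa [pref] using hnil
    rw [show i = 0 by omega, Nat.count_zero]
  · obtain ⟨n, hn⟩ : ∃ n, i + k = n + 1 :=
      Nat.exists_eq_succ_of_ne_zero fun h => hnil (by simp [h, pref])
    rw [hn, dropLast_pref_succ, cnt_pref_pref, show n + 1 - k = i by omega]

end Prefixes

section Predictors

open Finset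

variable {D : ℕ}

theorem bpred_pref_succ (x : ℕ → Fin D) (a : Fin D) (k i : ℕ) :
    Bpred D (pref x (i + k)) a (k + 1) =
      (Nat.count (fun j => (block k (x ∘ (j + ·)), x (j + k)) = (block k (x ∘ (i + ·)), a)) i +
        Bpred D (pref x (i + k)) a k) /
      (Nat.count (fun j => block k (x ∘ (j + ·)) = block k (x ∘ (i + ·))) i + 1) := by
  rw [Bpred, length_pref, if_pos (Nat.le_add_left k i), Nat.add_sub_cancel, drop_pref_add,
    cnt_pref_append_singleton_pref, cntPred_pref_pref]

theorem bpred_succ_of_length_lt {xs : List (Fin D)} (a : Fin D) {k : ℕ} (hk : xs.length < k) :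
    Bpred D xs a (k + 1) = Bpred D xs a k := by
  rw [Bpred, if_neg hk.not_ge]

variable [NeZero D]

theorem sum_bpred (xs : List (Fin D)) (k : ℕ) : ∑ a, Bpred D xs a k = 1 := by
  induction k with
  | zero => simp [Bpred]
  | succ k ih =>
    obtain hk | hk := lt_or_ge xs.length k
    · simpa only [bpred_succ_of_length_lt _ hk] using ih
    · obtain ⟨x, hx⟩ := exists_pref_eq xs
      obtain ⟨i, hi⟩ := Nat.exists_eq_add_of_le' hk
      rw [hi] at hx
      simp_rw [← hx] at ih ⊢
      simp_rw [bpred_pref_succ, ← sum_div, sum_add_distrib, ih, ← Nat.cast_sum]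
      rw [sum_count_prodMk (fun j => block k (x ∘ (j + ·))) (fun j => x (j + k)),
        div_self (by positivity)]

theorem one_div_le_bpred (xs : List (Fin D)) (a : Fin D) (k : ℕ) :
    1 / (D * (xs.length + 1 : ℝ) ^ k) ≤ Bpred D xs a k := by
  induction k with
  | zero => simp [Bpred]
  | succ k ih =>
    have bound_succ : 1 / (D * (xs.length + 1 : ℝ) ^ (k + 1)) =
        1 / (D * (xs.length + 1 : ℝ) ^ k) / (xs.length + 1) := by
      rw [pow_succ, ← mul_assoc, div_div]
    rw [bound_succ]
    obtain hk | hk := lt_or_ge xs.length k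
    · rw [bpred_succ_of_length_lt a hk]
      exact (div_le_self (by positivity) (by simp)).trans ih
    · obtain ⟨x, hx⟩ := exists_pref_eq xs
      obtain ⟨i, hi⟩ := Nat.exists_eq_add_of_le' hk
      rw [hi] at hx ih ⊢
      rw [← hx] at ih ⊢
      rw [bpred_pref_succ]
      gcongr
      · exact add_nonneg (Nat.cast_nonneg _) ((by positivity : (0 : ℝ) ≤ _).trans ih)
      · exact le_add_of_nonneg_of_le (Nat.cast_nonneg _) ih
      · exact (Nat.count_le _).trans (Nat.le_add_right i k)

theorem bpred_pos (xs : List (Fin D)) (a : Fin D) (k : ℕ) : 0 < Bpred D xs a k :=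
  have : 0 < D := NeZero.pos D
  lt_of_lt_of_le (by positivity) (one_div_le_bpred xs a k)

theorem bpred_le_one (xs : List (Fin D)) (a : Fin D) (k : ℕ) : Bpred D xs a k ≤ 1 :=
  (single_le_sum (f := fun b => Bpred D xs b k) (fun b _ => (bpred_pos xs b k).le)
    (mem_univ a)).trans_eq (sum_bpred xs k)

theorem one_div_pow_card_mul_prod_le_prod_bpred {k : ℕ} {θ : (Fin k → Fin D) → Fin D → ℝ}
    (hθ : ∀ w a, 0 ≤ θ w a) (hsum : ∀ w, ∑ a, θ w a ≤ 1) (x : ℕ → Fin D) {n : ℕ} (hn : n ≠ 0) :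
    (1 / (D * (n + k : ℝ) ^ (k + 1))) ^ Fintype.card ((Fin k → Fin D) × Fin D) *
        ∏ i ∈ range n, θ (block k (x ∘ (i + ·))) (x (i + k)) ≤
      ∏ i ∈ range n, Bpred D (pref x (i + k)) (x (i + k)) (k + 1) := by
  have hD₁ : (1 : ℝ) ≤ D := mod_cast NeZero.one_le
  have hn₁ : (1 : ℝ) ≤ n := mod_cast Nat.one_le_iff_ne_zero.2 hn
  have hnk : (n : ℝ) ≤ n + k := le_add_of_nonneg_right k.cast_nonneg
  set δ : ℝ := 1 / (D * (n + k : ℝ) ^ k) with hδ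
  have hδ₀ : 0 ≤ δ := by positivity
  have hδ₁ : δ ≤ 1 := div_le_one_of_le₀
    (one_le_mul_of_one_le_of_one_le hD₁ (one_le_pow₀ (hn₁.trans hnk))) (by positivity)
  have δ_le_bpred {i : ℕ} (hi : i < n) : δ ≤ Bpred D (pref x (i + k)) (x (i + k)) k := by
    refine le_trans ?_ (one_div_le_bpred _ _ _)
    have : (i : ℝ) + 1 ≤ n := mod_cast hi
    rw [hδ, length_pref, Nat.cast_add]
    gcongr 1 / (_ * ?_ ^ _)
    linarith
  calc _ ≤ (δ / n) ^ Fintype.card ((Fin k → Fin D) × Fin D) *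
          ∏ i ∈ range n, θ (block k (x ∘ (i + ·))) (x (i + k)) := by
        rw [pow_succ, ← mul_assoc, ← div_div, ← hδ]
        gcongr
        exact prod_nonneg fun _ _ => hθ _ _
    _ ≤ _ := div_pow_card_mul_prod_le_prod_count_add_div hθ hsum hδ₀ hδ₁
        (fun i => block k (x ∘ (i + ·))) (fun i => x (i + k)) n
    _ ≤ _ := by
        refine prod_le_prod (fun _ _ => by positivity) fun i hi => ?_
        rw [bpred_pref_succ]
        gcongr
        exact δ_le_bpred (mem_range.1 hi)

end Predictors

section Switch

open Finset

theorem le_prod_of_tendsto_prod_range {f : ℕ → ℝ} (hf₀ : ∀ i, 0 ≤ f i) (hf₁ : ∀ i, f i ≤ 1)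
    {L : ℝ} (hL : Tendsto (fun N => ∏ i ∈ range N, f i) atTop (𝓝 L)) (s : Finset ℕ) :
    L ≤ ∏ i ∈ s, f i := by
  obtain ⟨m, hm⟩ := s.exists_nat_subset_range
  refine le_of_tendsto hL (eventually_atTop.2 ⟨m, fun N hN => ?_⟩)
  exact prod_anti_set_of_le_one hf₀ hf₁ (hm.trans (range_mono hN))

variable {D : ℕ} {p : ℕ → ℝ} {x : ℕ → Fin D}

theorem ppart_eq_zero {n : ℕ} {k : ℤ} (h : k < -1 ∨ (n : ℤ) ≤ k) : Ppart D p x n k = 0 := by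
  obtain _ | _ | n := n
  · rw [Ppart]
  · rw [Ppart, if_neg (by omega), if_neg (by omega)]
  · rw [Ppart, if_neg (by omega)]

theorem ppart_add_two (n : ℕ) (k : ℤ) :
    Ppart D p x (n + 2) k =
      (p (n + 1) * Ppart D p x (n + 1) k + (1 - p (n + 1)) * Ppart D p x (n + 1) (k - 1)) *
        Bpred D (pref x (n + 1)) (x (n + 1)) (k + 1).toNat := by
  by_cases hk : -1 ≤ k ∧ k ≤ (n : ℤ) + 1
  · rw [Ppart, if_pos hk]
  · rw [ppart_eq_zero (by grind), ppart_eq_zero (n := n + 1) (k := k) (by grind),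
      ppart_eq_zero (n := n + 1) (k := k - 1) (by grind)]
    ring

theorem dependsOn_ppart (p : ℕ → ℝ) (n : ℕ) (k : ℤ) :
    DependsOn (fun x => Ppart D p x n k) (Set.Iio n) := by
  intro x y h
  induction n generalizing k with
  | zero => simp only [Ppart]
  | succ n ih =>
    obtain _ | n := n
    · simp only [Ppart, h 0 Nat.one_pos]
    · have ih' (k : ℤ) := ih k fun i hi => h i (Set.Iio_subset_Iio (Nat.le_succ _) hi)
      have hpref := dependsOn_pref (n + 1) fun i hi => h i (Set.Iio_subset_Iio (Nat.le_succ _) hi)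
      simp only at ih' hpref
      simp only [ppart_add_two, ih', hpref, h (n + 1) (Nat.lt_succ_self _)]

theorem dependsOn_swP (p : ℕ → ℝ) (n : ℕ) : DependsOn (fun x => swP D p x n) (Set.Iio n) :=
  fun _ _ h => sum_congr rfl fun _ _ => dependsOn_ppart p n _ h

theorem sum_range_ppart {n m : ℕ} (hm : n + 1 ≤ m) :
    ∑ k ∈ range m, Ppart D p x n ((k : ℤ) - 1) = swP D p x n :=
  (sum_subset (range_mono hm) fun k _ hk =>
    ppart_eq_zero (Or.inr (by rw [mem_range] at hk; omega))).symm

theorem sum_range_ppart_sub_two {n m : ℕ} (hm : n + 1 ≤ m) :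
    ∑ k ∈ range (m + 1), Ppart D p x n ((k : ℤ) - 1 - 1) = swP D p x n := by
  rw [sum_range_succ', ppart_eq_zero (k := ((0 : ℕ) : ℤ) - 1 - 1) (by simp), add_zero,
    ← sum_range_ppart hm]
  simp

variable [NeZero D]

theorem sum_swP_update_zero (p : ℕ → ℝ) (x : ℕ → Fin D) :
    ∑ a, swP D p (Function.update x 0 a) 1 = 1 := by
  have swP_one (y : ℕ → Fin D) :
      swP D p y 1 = p 0 * Bpred D [] (y 0) 0 + (1 - p 0) * Bpred D [] (y 0) 1 := by
    simp [swP, sum_range_succ, Ppart]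
  simp_rw [swP_one, Function.update_self, sum_add_distrib, ← mul_sum, sum_bpred]
  ring

theorem sum_swP_update_succ (p : ℕ → ℝ) (x : ℕ → Fin D) (n : ℕ) :
    ∑ a, swP D p (Function.update x (n + 1) a) (n + 2) = swP D p x (n + 1) := by
  have update_eq (a : Fin D) :
      ∀ i ∈ Set.Iio (n + 1), Function.update x (n + 1) a i = x i :=
    fun i hi => Function.update_of_ne (Set.mem_Iio.1 hi).ne _ _
  have ppart_update (a : Fin D) (k : ℤ) :
      Ppart D p (Function.update x (n + 1) a) (n + 1) k = Ppart D p x (n + 1) k :=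
    dependsOn_ppart p (n + 1) k (update_eq a)
  have pref_update (a : Fin D) : pref (Function.update x (n + 1) a) (n + 1) = pref x (n + 1) :=
    dependsOn_pref (n + 1) (update_eq a)
  have swP_update (a : Fin D) : swP D p (Function.update x (n + 1) a) (n + 2) =
      ∑ k ∈ range (n + 3), (p (n + 1) * Ppart D p x (n + 1) (k - 1) +
        (1 - p (n + 1)) * Ppart D p x (n + 1) (k - 1 - 1)) *
          Bpred D (pref x (n + 1)) a (k - 1 + 1 : ℤ).toNat := by
    simp only [swP, ppart_add_two, ppart_update, pref_update, Function.update_self]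
  simp_rw [swP_update]
  rw [sum_comm]
  simp_rw [← mul_sum, sum_bpred, mul_one, sum_add_distrib, ← mul_sum]
  rw [sum_range_ppart (by omega), sum_range_ppart_sub_two le_rfl]
  ring

theorem sum_swP_extendZero (p : ℕ → ℝ) {n : ℕ} (hn : n ≠ 0) :
    ∑ v : Fin n → Fin D, swP D p (extendZero v) n = 1 := by
  obtain ⟨n, rfl⟩ := Nat.exists_eq_succ_of_ne_zero hn
  induction n with
  | zero => simp [sum_eq_sum_sum_snoc, extendZero_snoc, sum_swP_update_zero]
  | succ n ih =>
    simp_rw [sum_eq_sum_sum_snoc (n := n + 1), extendZero_snoc, sum_swP_update_succ]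
    exact ih n.succ_ne_zero

section LowerBound

variable (hp : ∀ n, p n ∈ Set.Ioo (0 : ℝ) 1)
include hp

theorem ppart_nonneg (x : ℕ → Fin D) (n : ℕ) (k : ℤ) : 0 ≤ Ppart D p x n k := by
  have hp₀ (n : ℕ) : 0 ≤ p n := (hp n).1.le
  have hq₀ (n : ℕ) : 0 ≤ 1 - p n := sub_nonneg.2 (hp n).2.le
  have hB (xs : List (Fin D)) (a : Fin D) (k : ℕ) := (bpred_pos xs a k).le
  induction n generalizing k with
  | zero => rw [Ppart]
  | succ n ih =>
    obtain _ | n := n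
    · rw [Ppart]
      split_ifs
      exacts [mul_nonneg (hp₀ 0) (hB _ _ _), mul_nonneg (hq₀ 0) (hB _ _ _), le_rfl]
    · rw [ppart_add_two]
      exact mul_nonneg (add_nonneg (mul_nonneg (hp₀ _) (ih _)) (mul_nonneg (hq₀ _) (ih _)))
        (hB _ _ _)

theorem ppart_le_swP (x : ℕ → Fin D) {n k : ℕ} (hk : k < n) : Ppart D p x n k ≤ swP D p x n := by
  simpa [swP] using single_le_sum (f := fun k : ℕ => Ppart D p x n ((k : ℤ) - 1))
    (fun _ _ => ppart_nonneg hp x n _) (mem_range.2 (Nat.succ_lt_succ hk))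

theorem ppart_succ_self_pos (x : ℕ → Fin D) (k : ℕ) : 0 < Ppart D p x (k + 1) k := by
  have hq (n : ℕ) : 0 < 1 - p n := sub_pos.2 (hp n).2
  induction k with
  | zero => simpa [Ppart] using mul_pos (hq 0) (bpred_pos [] (x 0) 1)
  | succ k ih =>
    rw [ppart_add_two, Nat.cast_succ, add_sub_cancel_right]
    exact mul_pos (add_pos_of_nonneg_of_pos
      (mul_nonneg (hp _).1.le (ppart_nonneg hp x _ _)) (mul_pos (hq _) ih)) (bpred_pos _ _ _)

theorem swP_pos (x : ℕ → Fin D) {n : ℕ} (hn : n ≠ 0) : 0 < swP D p x n := by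
  obtain ⟨k, rfl⟩ := Nat.exists_eq_succ_of_ne_zero hn
  exact (ppart_succ_self_pos hp x k).trans_le (ppart_le_swP hp x k.lt_succ_self)

theorem ppart_mul_prod_Ico_le (x : ℕ → Fin D) (k : ℕ) {m n : ℕ} (hm : m ≠ 0) (hmn : m ≤ n) :
    Ppart D p x m k * ∏ i ∈ Ico m n, p i * Bpred D (pref x i) (x i) (k + 1) ≤
      Ppart D p x n k := by
  induction n, hmn using Nat.le_induction with
  | base => simp
  | succ n hmn ih =>
    obtain ⟨n, rfl⟩ := Nat.exists_eq_succ_of_ne_zero (by omega : n ≠ 0)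
    have hB := (bpred_pos (pref x (n + 1)) (x (n + 1)) (k + 1)).le
    have hstay : p (n + 1) * Ppart D p x (n + 1) k ≤ p (n + 1) * Ppart D p x (n + 1) k +
        (1 - p (n + 1)) * Ppart D p x (n + 1) (k - 1) :=
      le_add_of_nonneg_right (mul_nonneg (sub_nonneg.2 (hp _).2.le) (ppart_nonneg hp x _ _))
    rw [prod_Ico_succ_top hmn, ppart_add_two, show ((k : ℤ) + 1).toNat = k + 1 by omega,
      ← mul_assoc]
    calc _ ≤ Ppart D p x (n + 1) k *
            (p (n + 1) * Bpred D (pref x (n + 1)) (x (n + 1)) (k + 1)) :=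
          mul_le_mul_of_nonneg_right ih (mul_nonneg (hp _).1.le hB)
      _ = p (n + 1) * Ppart D p x (n + 1) k * Bpred D (pref x (n + 1)) (x (n + 1)) (k + 1) := by
          ring
      _ ≤ _ := mul_le_mul_of_nonneg_right hstay hB

theorem exists_mul_prod_bpred_le_swP
    (hprod : ∃ L, 0 < L ∧ Tendsto (fun N : ℕ => ∏ i ∈ range N, p i) atTop (𝓝 L)) (k : ℕ) :
    ∃ c > 0, ∀ (x : ℕ → Fin D) (n : ℕ), n ≠ 0 →
      c * ∏ i ∈ range n, Bpred D (pref x (i + k)) (x (i + k)) (k + 1) ≤ swP D p x (n + k) := by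
  obtain ⟨L, hL₀, hL⟩ := hprod
  obtain ⟨y, hy⟩ := exists_forall_le_of_dependsOn_Iio (dependsOn_ppart (D := D) p (k + 1) k)
  refine ⟨Ppart D p y (k + 1) k * L, mul_pos (ppart_succ_self_pos hp y k) hL₀, fun x n hn => ?_⟩
  have hB (i : ℕ) := (bpred_pos (pref x i) (x i) (k + 1)).le
  have prod_B_le : ∏ i ∈ range n, Bpred D (pref x (i + k)) (x (i + k)) (k + 1) ≤
      ∏ i ∈ Ico (k + 1) (n + k), Bpred D (pref x i) (x i) (k + 1) := by
    rw [range_eq_Ico, prod_Ico_add' (fun i => Bpred D (pref x i) (x i) (k + 1)), zero_add]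
    exact prod_le_prod_of_subset_of_le_one (Ico_subset_Ico_left k.le_succ)
      (fun i _ => hB i) fun i _ _ => bpred_le_one _ _ _
  calc _ ≤ Ppart D p x (k + 1) k * ((∏ i ∈ Ico (k + 1) (n + k), p i) *
        ∏ i ∈ Ico (k + 1) (n + k), Bpred D (pref x i) (x i) (k + 1)) := by
        rw [mul_assoc]
        gcongr
        · exact mul_nonneg hL₀.le (prod_nonneg fun i _ => hB _)
        · exact ppart_nonneg hp x _ _
        · exact hy x
        · exact prod_nonneg fun i _ => hB _
        · exact prod_nonneg fun i _ => (hp i).1.le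
        · exact le_prod_of_tendsto_prod_range (fun i => (hp i).1.le) (fun i => (hp i).2.le) hL _
    _ ≤ Ppart D p x (n + k) k := by
        rw [← prod_mul_distrib]
        exact ppart_mul_prod_Ico_le hp x k k.succ_ne_zero (by omega)
    _ ≤ swP D p x (n + k) := ppart_le_swP hp x (by omega)

theorem exists_div_pow_mul_prod_le_swP
    (hprod : ∃ L, 0 < L ∧ Tendsto (fun N : ℕ => ∏ i ∈ range N, p i) atTop (𝓝 L))
    {k : ℕ} {θ : (Fin k → Fin D) → Fin D → ℝ}
    (hθ : ∀ w a, 0 ≤ θ w a) (hsum : ∀ w, ∑ a, θ w a ≤ 1) :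
    ∃ c > 0, ∃ M : ℕ, ∀ (x : ℕ → Fin D) (n : ℕ), n ≠ 0 →
      c / (n + k : ℝ) ^ M * ∏ i ∈ range n, θ (block k (x ∘ (i + ·))) (x (i + k)) ≤
        swP D p x (n + k) := by
  obtain ⟨c, hc, hswP⟩ := exists_mul_prod_bpred_le_swP (D := D) hp hprod k
  have hD : (0 : ℝ) < D := mod_cast NeZero.pos D
  set m := Fintype.card ((Fin k → Fin D) × Fin D)
  refine ⟨c / D ^ m, by positivity, (k + 1) * m, fun x n hn => ?_⟩
  calc c / D ^ m / (n + k : ℝ) ^ ((k + 1) * m) *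
        ∏ i ∈ range n, θ (block k (x ∘ (i + ·))) (x (i + k))
    _ = c * ((1 / (D * (n + k : ℝ) ^ (k + 1))) ^ m *
        ∏ i ∈ range n, θ (block k (x ∘ (i + ·))) (x (i + k))) := by
        rw [div_div, pow_mul, ← mul_pow, one_div, inv_pow, div_eq_mul_inv, mul_assoc]
    _ ≤ c * ∏ i ∈ range n, Bpred D (pref x (i + k)) (x (i + k)) (k + 1) := by
        gcongr
        exact one_div_pow_card_mul_prod_le_prod_bpred hθ hsum x hn
    _ ≤ _ := hswP x n hn

end LowerBound

end Switch

section Law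

open Finset

variable {D : ℕ}

theorem path_iterate_shiftT (ω : Omega D) (i : ℕ) :
    path D ((shiftT D)^[i] ω) = path D ω ∘ (i + ·) := by
  induction i generalizing ω with
  | zero => simp [Function.comp_def]
  | succ i ih =>
    rw [Function.iterate_succ_apply, ih]
    funext j
    simp only [path, shiftT, Function.comp_apply]
    congr 1
    push_cast
    ring

/-- The distribution of the block `X_1^n` under `Q`. -/
noncomputable def blockLaw (Q : Measure (Omega D)) (n : ℕ) : Measure (Fin n → Fin D) :=
  Q.map fun ω => block n (path D ω)

theorem measurable_block_path (n : ℕ) : Measurable fun ω : Omega D => block n (path D ω) :=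
  measurable_pi_lambda _ fun _ => measurable_pi_apply _

theorem preimage_block_path_singleton (x : ℕ → Fin D) (n : ℕ) :
    (fun ω => block n (path D ω)) ⁻¹' {block n x} = cylSet D x n := by
  ext ω
  simp [cylSet, block, path, funext_iff, Fin.forall_iff]

theorem qstr_eq_blockLaw_real (Q : Measure (Omega D)) (x : ℕ → Fin D) (n : ℕ) :
    Qstr D Q x n = (blockLaw Q n).real {block n x} := by
  rw [blockLaw, map_measureReal_apply (measurable_block_path n) (measurableSet_singleton _),
    preimage_block_path_singleton, Qstr, measureReal_def]

theorem qstr_nonneg (Q : Measure (Omega D)) (x : ℕ → Fin D) (n : ℕ) : 0 ≤ Qstr D Q x n :=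
  ENNReal.toReal_nonneg

theorem dependsOn_qstr (Q : Measure (Omega D)) (n : ℕ) :
    DependsOn (fun x => Qstr D Q x n) (Set.Iio n) := by
  intro x y h
  have block_eq : block n x = block n y := funext fun i => h i i.2
  simp only [qstr_eq_blockLaw_real, block_eq]

variable (Q : Measure (Omega D)) [IsProbabilityMeasure Q]

instance (n : ℕ) : IsProbabilityMeasure (blockLaw Q n) :=
  Measure.isProbabilityMeasure_map (measurable_block_path n).aemeasurable

theorem ae_qstr_pos (n : ℕ) : ∀ᵐ ω ∂Q, 0 < Qstr D Q (path D ω) n := by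
  have singleton_pos : ∀ᵐ v ∂blockLaw Q n, 0 < (blockLaw Q n).real {v} :=
    ae_iff_of_countable.2 fun v hv => ENNReal.toReal_pos hv (by finiteness)
  simp_rw [qstr_eq_blockLaw_real]
  exact ae_of_ae_map (measurable_block_path n).aemeasurable singleton_pos

variable [NeZero D] {n : ℕ} {f : (ℕ → Fin D) → ℝ}

theorem sum_qstr_extendZero (n : ℕ) :
    ∑ v : Fin n → Fin D, Qstr D Q (extendZero v) n = 1 := by
  simp_rw [qstr_eq_blockLaw_real, block_extendZero]
  rw [sum_measureReal_singleton, coe_univ, probReal_univ]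

theorem integrable_comp_path (hf : DependsOn f (Set.Iio n)) :
    Integrable (fun ω => f (path D ω)) Q := by
  have integrable_extend : Integrable (fun v => f (extendZero v)) (blockLaw Q n) := .of_finite
  simpa only [Function.comp_def, apply_extendZero_block hf] using
    integrable_extend.comp_measurable (measurable_block_path n)

theorem integral_comp_path (hf : DependsOn f (Set.Iio n)) :
    ∫ ω, f (path D ω) ∂Q = ∑ v : Fin n → Fin D, Qstr D Q (extendZero v) n * f (extendZero v) := by
  calc ∫ ω, f (path D ω) ∂Q
    _ = ∫ ω, f (extendZero (block n (path D ω))) ∂Q := by simp only [apply_extendZero_block hf]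
    _ = ∫ v, f (extendZero v) ∂blockLaw Q n :=
      (integral_map (f := fun v => f (extendZero v)) (measurable_block_path n).aemeasurable
        .of_discrete).symm
    _ = _ := by
      simp only [integral_fintype .of_finite, qstr_eq_blockLaw_real, block_extendZero, smul_eq_mul]

variable {Q} (hstat : MeasurePreserving (shiftT D) Q Q)
include hstat

theorem integrable_comp_path_comp_add (hf : DependsOn f (Set.Iio n)) (i : ℕ) :
    Integrable (fun ω => f (path D ω ∘ (i + ·))) Q := by
  simp_rw [← path_iterate_shiftT]
  exact (hstat.iterate i).integrable_comp_of_integrable (integrable_comp_path Q hf)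

theorem integral_comp_path_comp_add (hf : DependsOn f (Set.Iio n)) (i : ℕ) :
    ∫ ω, f (path D ω ∘ (i + ·)) ∂Q = ∫ ω, f (path D ω) ∂Q := by
  simp_rw [← path_iterate_shiftT]
  nth_rw 2 [← (hstat.iterate i).map_eq]
  rw [integral_map (hstat.iterate i).aemeasurable]
  simpa only [(hstat.iterate i).map_eq] using (integrable_comp_path Q hf).aestronglyMeasurable

end Law

section Entropy

open Finset ProbabilityTheory

theorem sum_mul_neg_log_le_sum_mul_neg_log {ι : Type*} {s : Finset ι} {q r : ι → ℝ}
    (hq : ∀ i ∈ s, 0 ≤ q i) (hr : ∀ i ∈ s, 0 < r i) (h : ∑ i ∈ s, r i ≤ ∑ i ∈ s, q i) :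
    ∑ i ∈ s, q i * -Real.log (q i) ≤ ∑ i ∈ s, q i * -Real.log (r i) := by
  have term_le {i : ι} (hi : i ∈ s) :
      q i * -Real.log (q i) - q i * -Real.log (r i) ≤ r i - q i := by
    obtain hq₀ | hq₀ := (hq i hi).eq_or_lt
    · simpa [← hq₀] using (hr i hi).le
    · calc q i * -Real.log (q i) - q i * -Real.log (r i)
        _ = q i * Real.log (r i / q i) := by
          rw [Real.log_div (hr i hi).ne' hq₀.ne']
          ring
        _ ≤ q i * (r i / q i - 1) := by
          gcongr
          exact Real.log_le_sub_one_of_pos (div_pos (hr i hi) hq₀)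
        _ = r i - q i := by
          field_simp
  rw [← sub_nonpos, ← sum_sub_distrib]
  calc _ ≤ ∑ i ∈ s, (r i - q i) := sum_le_sum fun i hi => term_le hi
    _ ≤ 0 := by rwa [sum_sub_distrib, sub_nonpos]

theorem exists_succ_sub_lt_of_tendsto_div {H : ℕ → ℝ} {h r : ℝ}
    (hH : Tendsto (fun n : ℕ => H n / n) atTop (𝓝 h)) (hr : h < r) :
    ∃ k, H (k + 1) - H k < r := by
  by_contra! increment_ge
  have linear_le (n : ℕ) : H 0 + n * r ≤ H n := by
    induction n with
    | zero => simp
    | succ n ih =>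
      push_cast
      linarith [increment_ge n]
  have tendsto_linear : Tendsto (fun n : ℕ => H 0 / n + r) atTop (𝓝 (0 + r)) :=
    (tendsto_const_div_atTop_nhds_zero_nat (H 0)).add_const r
  refine hr.not_ge (zero_add r ▸ le_of_tendsto_of_tendsto tendsto_linear hH ?_)
  filter_upwards [eventually_ne_atTop 0] with n hn
  rw [div_add' _ _ _ (Nat.cast_ne_zero.2 hn), mul_comm r]
  gcongr
  exact linear_le n

theorem tendsto_add_mul_log_add_mul_div (C M h : ℝ) :
    Tendsto (fun n : ℕ => (C + M * Real.log n + n * h) / n) atTop (𝓝 h) := by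
  have tendsto_log_div : Tendsto (fun n : ℕ => Real.log n / n) atTop (𝓝 0) :=
    Real.isLittleO_log_id_atTop.tendsto_div_nhds_zero.comp tendsto_natCast_atTop_atTop
  have tendsto_sum := ((tendsto_const_div_atTop_nhds_zero_nat C).add
    (tendsto_log_div.const_mul M)).add_const h
  rw [mul_zero, zero_add, zero_add] at tendsto_sum
  refine tendsto_sum.congr' ?_
  filter_upwards [eventually_ne_atTop 0] with n hn
  field_simp

variable {D : ℕ} (Q : Measure (Omega D))

/-- The entropy `E_Q[-log Q(X_1^n)]` of the block `X_1^n`, in nats. -/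
noncomputable def blockEntropy (n : ℕ) : ℝ := ∫ ω, -Real.log (Qstr D Q (path D ω) n) ∂Q

/-- The transition probabilities `Q(X_{k+1} = a | X_1^k = w)` of the `k`-th order Markov
approximation of `Q`; all of them are `0` for a context `w` of probability zero. -/
noncomputable def transProb {k : ℕ} (w : Fin k → Fin D) (a : Fin D) : ℝ :=
  Q[|(fun ω => block k (path D ω)) ⁻¹' {w}].real ((fun ω => path D ω k) ⁻¹' {a})

theorem transProb_nonneg {k : ℕ} (w : Fin k → Fin D) (a : Fin D) : 0 ≤ transProb Q w a :=
  measureReal_nonneg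

theorem sum_transProb_le_one {k : ℕ} (w : Fin k → Fin D) : ∑ a, transProb Q w a ≤ 1 := by
  have measurable_coord : Measurable fun ω : Omega D => path D ω k := measurable_pi_apply _
  simp_rw [transProb]
  rw [sum_measureReal_preimage_singleton univ
    fun a _ => measurable_coord (measurableSet_singleton a)]
  exact measureReal_le_one

theorem transProb_block (x : ℕ → Fin D) (k : ℕ) :
    transProb Q (block k x) (x k) = Qstr D Q x (k + 1) / Qstr D Q x k := by
  have cyl_inter : cylSet D x k ∩ (fun ω => path D ω k) ⁻¹' {x k} = cylSet D x (k + 1) := by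
    ext ω
    simp only [cylSet, path, Set.mem_inter_iff, Set.mem_ofPred_eq, Set.mem_preimage,
      Set.mem_singleton_iff, Nat.forall_lt_succ_right]
  have measurableSet_cyl : MeasurableSet (cylSet D x k) := by
    rw [← preimage_block_path_singleton]
    exact measurable_block_path k (measurableSet_singleton _)
  rw [transProb, preimage_block_path_singleton, measureReal_def, cond_apply measurableSet_cyl,
    cyl_inter, ENNReal.toReal_mul, ENNReal.toReal_inv, mul_comm, ← div_eq_mul_inv, Qstr, Qstr]

/-- The information `-log Q(x_{k+1} | x_1^k)` carried by the symbol `x_{k+1}` given the `k`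
symbols before it. -/
noncomputable def condInfo (k : ℕ) (x : ℕ → Fin D) : ℝ :=
  -Real.log (transProb Q (block k x) (x k))

theorem dependsOn_condInfo (k : ℕ) : DependsOn (condInfo Q k) (Set.Iio (k + 1)) := by
  intro x y h
  obtain ⟨block_eq, last_eq⟩ := Prod.mk.inj
    (block_succ_eq_block_succ_iff.1 (funext fun i : Fin (k + 1) => h i i.2))
  rw [condInfo, condInfo, block_eq, last_eq]

variable [IsProbabilityMeasure Q]

theorem ae_forall_transProb_pos (hstat : MeasurePreserving (shiftT D) Q Q) (k : ℕ) :
    ∀ᵐ ω ∂Q, ∀ i,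
      0 < transProb Q (block k (path D ω ∘ (i + ·))) (path D ω (i + k)) := by
  have ae_pos : ∀ᵐ ω ∂Q, 0 < transProb Q (block k (path D ω)) (path D ω k) := by
    filter_upwards [ae_qstr_pos Q (k + 1), ae_qstr_pos Q k] with ω hsucc hk
    rw [transProb_block]
    exact div_pos hsucc hk
  refine ae_all_iff.2 fun i => ?_
  filter_upwards [(hstat.iterate i).quasiMeasurePreserving.ae ae_pos] with ω hω
  simpa only [path_iterate_shiftT, Function.comp_apply] using hω

variable [NeZero D]

theorem blockEntropy_le_integral_neg_log {n : ℕ} {r : (ℕ → Fin D) → ℝ}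
    (hr : DependsOn r (Set.Iio n)) (hr₀ : ∀ x, 0 < r x)
    (hsum : ∑ v : Fin n → Fin D, r (extendZero v) ≤ 1) :
    blockEntropy Q n ≤ ∫ ω, -Real.log (r (path D ω)) ∂Q := by
  rw [blockEntropy, integral_comp_path Q (dependsOn_neg_log (dependsOn_qstr Q n)),
    integral_comp_path Q (dependsOn_neg_log hr)]
  exact sum_mul_neg_log_le_sum_mul_neg_log (fun v _ => qstr_nonneg Q _ n) (fun v _ => hr₀ _)
    (hsum.trans_eq (sum_qstr_extendZero Q n).symm)

theorem integral_condInfo_path (k : ℕ) :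
    ∫ ω, condInfo Q k (path D ω) ∂Q = blockEntropy Q (k + 1) - blockEntropy Q k := by
  have integrable_neg_log_qstr (n : ℕ) := integrable_comp_path Q
    (dependsOn_neg_log (dependsOn_qstr Q n))
  rw [blockEntropy, blockEntropy,
    ← integral_sub (integrable_neg_log_qstr _) (integrable_neg_log_qstr _)]
  refine integral_congr_ae ?_
  filter_upwards [ae_qstr_pos Q (k + 1), ae_qstr_pos Q k] with ω hsucc hk
  rw [condInfo, transProb_block, Real.log_div hsucc.ne' hk.ne']
  ring

variable {Q} (hstat : MeasurePreserving (shiftT D) Q Q)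
include hstat

theorem integral_sum_condInfo_path_comp_add (k n : ℕ) :
    ∫ ω, ∑ i ∈ range n, condInfo Q k (path D ω ∘ (i + ·)) ∂Q =
      n * (blockEntropy Q (k + 1) - blockEntropy Q k) := by
  have hdep := dependsOn_condInfo Q k
  rw [integral_finsetSum _ fun i _ => integrable_comp_path_comp_add hstat hdep i,
    sum_congr rfl fun i _ => integral_comp_path_comp_add hstat hdep i,
    integral_condInfo_path, sum_const, card_range, nsmul_eq_mul]

variable {p : ℕ → ℝ} (hp : ∀ n, p n ∈ Set.Ioo (0 : ℝ) 1)
  (hprod : ∃ L, 0 < L ∧ Tendsto (fun N : ℕ => ∏ i ∈ range N, p i) atTop (𝓝 L))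
include hp hprod

theorem exists_ae_neg_log_swP_le (k : ℕ) :
    ∃ C M : ℝ, ∀ n : ℕ, n ≠ 0 → ∀ᵐ ω ∂Q,
      -Real.log (swP D p (path D ω) (n + k)) ≤
        C + M * Real.log (n + k) + ∑ i ∈ range n, condInfo Q k (path D ω ∘ (i + ·)) := by
  obtain ⟨c, hc, M, hswP⟩ := exists_div_pow_mul_prod_le_swP hp hprod
    (transProb_nonneg Q (k := k)) (sum_transProb_le_one Q)
  refine ⟨-Real.log c, M, fun n hn => ?_⟩
  filter_upwards [ae_forall_transProb_pos Q hstat k] with ω hpos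
  have hprod_pos := prod_pos fun i (_ : i ∈ range n) => hpos i
  have log_le := Real.log_le_log (by positivity) (hswP (path D ω) n hn)
  rw [Real.log_mul (by positivity) hprod_pos.ne', Real.log_div hc.ne' (by positivity),
    Real.log_pow, Real.log_prod fun i _ => (hpos i).ne'] at log_le
  simp only [condInfo, sum_neg_distrib, Function.comp_apply]
  linarith

theorem exists_integral_neg_log_swP_le (k : ℕ) :
    ∃ C M : ℝ, ∀ n : ℕ, k < n → ∫ ω, -Real.log (swP D p (path D ω) n) ∂Q ≤
      C + M * Real.log n + n * (blockEntropy Q (k + 1) - blockEntropy Q k) := by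
  obtain ⟨C, M, hae⟩ := exists_ae_neg_log_swP_le hstat hp hprod k
  set Δ := blockEntropy Q (k + 1) - blockEntropy Q k
  refine ⟨C - k * Δ, M, fun m hkm => ?_⟩
  obtain ⟨n, rfl⟩ := Nat.exists_eq_add_of_le' hkm.le
  have hn : n ≠ 0 := by omega
  have integrable_sum := integrable_finsetSum (range n) fun i _ =>
    integrable_comp_path_comp_add hstat (dependsOn_condInfo Q k) i
  calc ∫ ω, -Real.log (swP D p (path D ω) (n + k)) ∂Q
    _ ≤ ∫ ω, (C + M * Real.log (n + k) +
          ∑ i ∈ range n, condInfo Q k (path D ω ∘ (i + ·))) ∂Q :=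
        integral_mono_ae (integrable_comp_path Q (dependsOn_neg_log (dependsOn_swP p _)))
          ((integrable_const _).add integrable_sum) (hae n hn)
    _ = C + M * Real.log (n + k) + n * Δ := by
        rw [integral_add (integrable_const _) integrable_sum, integral_const, probReal_univ,
          one_smul, integral_sum_condInfo_path_comp_add hstat]
    _ = _ := by
        push_cast
        ring

end Entropy

/-- The plain switch distribution is weakly universal: for every stationary
probability measure `Q` on `Ω = {1,...,D}^ℤ`,
`lim_{n→∞} (1/n)·E_Q[−log P(X_1^n)] = h_Q`, where `h_Q` is the entropy rate of `Q`. -/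
theorem plain_switch_weakly_universal
    (D : ℕ) (hD : 2 ≤ D) (p : ℕ → ℝ) (hp : ∀ n, p n ∈ Set.Ioo (0 : ℝ) 1)
    (hprod : ∃ L, 0 < L ∧ Tendsto (fun N : ℕ => ∏ i ∈ Finset.range N, p i) atTop (𝓝 L))
    (Q : Measure (Omega D)) [IsProbabilityMeasure Q]
    (hstat : MeasurePreserving (shiftT D) Q Q)
    (hQ : ℝ)
    (hent : Tendsto
      (fun n : ℕ => (∫ ω, -Real.log (Qstr D Q (path D ω) n) ∂Q) / n) atTop (𝓝 hQ)) :
    Tendsto (fun n : ℕ => (∫ ω, -Real.log (swP D p (path D ω) n) ∂Q) / n) atTop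
      (𝓝 hQ) := by
  have : NeZero D := ⟨by omega⟩
  refine tendsto_order.2 ⟨fun r hr => ?_, fun r hr => ?_⟩
  · filter_upwards [hent.eventually_const_lt hr, eventually_ne_atTop 0] with n hrn hn
    refine hrn.trans_le ?_
    gcongr ?_ / _
    exact blockEntropy_le_integral_neg_log Q (dependsOn_swP p n) (fun x => swP_pos hp x hn)
      (sum_swP_extendZero p hn).le
  · obtain ⟨k, hk⟩ := exists_succ_sub_lt_of_tendsto_div (H := blockEntropy Q) hent hr
    obtain ⟨C, M, hle⟩ := exists_integral_neg_log_swP_le hstat hp hprod k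
    filter_upwards [(tendsto_add_mul_log_add_mul_div C M _).eventually_lt_const hk,
      eventually_gt_atTop k] with n hnr hkn
    refine lt_of_le_of_lt ?_ hnr
    gcongr ?_ / _
    exact hle n hkn
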